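/- Let D be a dendriform algebra, V a vector space, and let Ω(D,V) and Ω′(D,V) be two dendriform extending structures of D through V, with unified products D♮V and D♮′V. For linear maps g : V → D and h : V → V, the map φ : D×V → D×V, φ(a,x) := (a + g(x), h(x)), is a morphism of dendriform algebras from D♮V to D♮′V satisfying φ(a,0) = (a,0) for all a ∈ D if and only if (g,h) satisfies conditions (E1)–(E5) for all a ∈ D, x,y ∈ V: (E1) h(a▷₁x) = a▷₁′h(x), h(a▷₂x) = a▷₂′h(x), h(x◁₁a) = h(x)◁₁′a, h(x◁₂a) = h(x)◁₂′a; (E2) x⇀₁a + g(x◁₁a) = g(x)≻a + h(x)⇀₁′a and x⇀₂a + g(x◁₂a) = g(x)≺a + h(x)⇀₂′a; (E3) a↼₁x + g(a▷₁x) = a≻g(x) + a↼₁′h(x) and a↼₂x + g(a▷₂x) = a≺g(x) + a↼₂′h(x); (E4) f₁(x,y) + g(x≻_Vy) = g(x)≻g(y) + g(x)↼₁′h(y) + h(x)⇀₁′g(y) + f₁′(h(x),h(y)) and f₂(x,y) + g(x≺_Vy) = g(x)≺g(y) + g(x)↼₂′h(y) + h(x)⇀₂′g(y) + f₂′(h(x),h(y));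 (E5) h(x≻_Vy) = g(x)▷₁′h(y) + h(x)◁₁′g(y) + h(x)≻_V′h(y) and h(x≺_Vy) = g(x)▷₂′h(y) + h(x)◁₂′g(y) + h(x)≺_V′h(y). Moreover, every morphism of dendriform algebras ψ : D♮V → D♮′V with ψ(a,0) = (a,0) for all a ∈ D equals φ for a unique such pair (g,h). -/

import Mathlib

/-! Both operations of the unified product are biadditive, so a map
`φ(a, x) = (a + g x, h x)` preserves one of them if and only if it does so on the four kinds of
pairs built from elements `(a, 0)` and `(0, x)`: pairs in `D × D` give no condition,
pairs in `V × D` give (E2) and half of (E1), pairs in `D × V` give (E3) and the other half of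
(E1), and pairs in `V × V` give (E4) and (E5). This is `preserves_uSucc_iff`; the statement for
`⪯` is the same one for the datum with the roles of `≻` and `≺` exchanged.

Every linear `ψ` fixing `(a, 0)` has the form `ψ(a, x) = (a, 0) + ψ(0, x)`, so the pair `(g, h)`
consists of the two components of `x ↦ ψ(0, x)`, and this forces uniqueness. -/

/- Common framework for dendriform algebras, extending structures and unified
products, over the field `ℂ`.  All operations are encoded as plain functions
together with bilinearity predicates. -/

namespace DendriformES

section Basic

variable {M N P : Type*} [AddCommGroup M] [Module ℂ M] [AddCommGroup N] [Module ℂ N]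
  [AddCommGroup P] [Module ℂ P]

/-- A map `f : M → N → P` is (ℂ-)bilinear. -/
def IsBilinear (f : M → N → P) : Prop :=
  (∀ a b y, f (a + b) y = f a y + f b y) ∧
  (∀ (c : ℂ) (a : M) (y : N), f (c • a) y = c • f a y) ∧
  (∀ a x y, f a (x + y) = f a x + f a y) ∧
  (∀ (c : ℂ) (a : M) (x : N), f a (c • x) = c • f a x)

end Basic

section Dend

variable {D V : Type*} [AddCommGroup D] [Module ℂ D] [AddCommGroup V] [Module ℂ V]

/-- The three dendriform axioms for a pair of binary operations `s = ≻`, `p = ≺`. -/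
def DendAxioms (s p : D → D → D) : Prop :=
  (∀ x y z, s (s x y + p x y) z = s x (s y z)) ∧
  (∀ x y z, p (p x y) z = p x (s y z + p y z)) ∧
  (∀ x y z, p (s x y) z = s x (p y z))

/-- `(D, s, p)` is a dendriform algebra: both operations are bilinear and the
three dendriform axioms hold. -/
def IsDendriform (s p : D → D → D) : Prop :=
  IsBilinear s ∧ IsBilinear p ∧ DendAxioms s p

/-- `(V, t1, t2)` is a left module over the dendriform algebra `(D, s, p)`. -/
def IsLeftDModule (s p : D → D → D) (t1 t2 : D → V → V) : Prop :=
  IsBilinear t1 ∧ IsBilinear t2 ∧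
  (∀ a b x, t1 (s a b + p a b) x = t1 a (t1 b x)) ∧
  (∀ a b x, t2 (p a b) x = t2 a (t1 b x + t2 b x)) ∧
  (∀ a b x, t2 (s a b) x = t1 a (t2 b x))

/-- `(V, l1, l2)` is a right module over the dendriform algebra `(D, s, p)`. -/
def IsRightDModule (s p : D → D → D) (l1 l2 : V → D → V) : Prop :=
  IsBilinear l1 ∧ IsBilinear l2 ∧
  (∀ a b x, l1 (l1 x a + l2 x a) b = l1 x (s a b)) ∧
  (∀ a b x, l2 (l2 x a) b = l2 x (s a b + p a b)) ∧
  (∀ a b x, l2 (l1 x a) b = l1 x (p a b))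

/-- `(V, t1, t2, l1, l2)` is a bimodule over the dendriform algebra `(D, s, p)`. -/
def IsDBimodule (s p : D → D → D) (t1 t2 : D → V → V) (l1 l2 : V → D → V) : Prop :=
  IsLeftDModule s p t1 t2 ∧ IsRightDModule s p l1 l2 ∧
  (∀ a b x, l1 (t1 a x + t2 a x) b = t1 a (l1 x b)) ∧
  (∀ a b x, l2 (t2 a x) b = t2 a (l1 x b + l2 x b)) ∧
  (∀ a b x, l2 (t1 a x) b = t1 a (l2 x b))

/-- A morphism of dendriform algebras: a linear map preserving both operations. -/
def IsDendMorphism (s p : D → D → D) (s' p' : V → V → V) (φ : D → V) : Prop :=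
  IsLinearMap ℂ φ ∧ (∀ x y, φ (s x y) = s' (φ x) (φ y)) ∧
    (∀ x y, φ (p x y) = p' (φ x) (φ y))

end Dend

/-- An extending datum `Ω(D,V)` of `D` through `V`: twelve maps
`tr1, tr2 = ▷₁, ▷₂ : D×V→V`, `sl1, sl2 = ◁₁, ◁₂ : V×D→V`,
`hr1, hr2 = ⇀₁, ⇀₂ : V×D→D`, `hl1, hl2 = ↼₁, ↼₂ : D×V→D`,
`cf1, cf2 = f₁, f₂ : V×V→D`, `sv, pv = ≻_V, ≺_V : V×V→V`. -/
structure ExtendingDatum (D V : Type*) [AddCommGroup D] [Module ℂ D]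
    [AddCommGroup V] [Module ℂ V] where
  tr1 : D → V → V
  tr2 : D → V → V
  sl1 : V → D → V
  sl2 : V → D → V
  hr1 : V → D → D
  hr2 : V → D → D
  hl1 : D → V → D
  hl2 : D → V → D
  cf1 : V → V → D
  cf2 : V → V → D
  sv : V → V → V
  pv : V → V → V

section Datum

variable {D V : Type*} [AddCommGroup D] [Module ℂ D] [AddCommGroup V] [Module ℂ V]

/-- All twelve maps of an extending datum are bilinear. -/
def ExtendingDatum.Bilinear (Ω : ExtendingDatum D V) : Prop :=
  IsBilinear Ω.tr1 ∧ IsBilinear Ω.tr2 ∧ IsBilinear Ω.sl1 ∧ IsBilinear Ω.sl2 ∧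
  IsBilinear Ω.hr1 ∧ IsBilinear Ω.hr2 ∧ IsBilinear Ω.hl1 ∧ IsBilinear Ω.hl2 ∧
  IsBilinear Ω.cf1 ∧ IsBilinear Ω.cf2 ∧ IsBilinear Ω.sv ∧ IsBilinear Ω.pv

/-- The operation `⪰` of the unified product `D ♮ V`. -/
def uSucc (s : D → D → D) (Ω : ExtendingDatum D V) : D × V → D × V → D × V :=
  fun u v =>
    (s u.1 v.1 + Ω.hl1 u.1 v.2 + Ω.hr1 u.2 v.1 + Ω.cf1 u.2 v.2,
     Ω.tr1 u.1 v.2 + Ω.sl1 u.2 v.1 + Ω.sv u.2 v.2)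

/-- The operation `⪯` of the unified product `D ♮ V`. -/
def uPrec (p : D → D → D) (Ω : ExtendingDatum D V) : D × V → D × V → D × V :=
  fun u v =>
    (p u.1 v.1 + Ω.hl2 u.1 v.2 + Ω.hr2 u.2 v.1 + Ω.cf2 u.2 v.2,
     Ω.tr2 u.1 v.2 + Ω.sl2 u.2 v.1 + Ω.pv u.2 v.2)

/-- An extending datum is a dendriform extending structure when the unified
product `D ♮ V` is a dendriform algebra. -/
def IsExtendingStructure (s p : D → D → D) (Ω : ExtendingDatum D V) : Prop :=
  Ω.Bilinear ∧ IsDendriform (uSucc s Ω) (uPrec p Ω)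

/-- Conditions (E1)–(E5) on a pair of linear maps `g : V → D`, `h : V → V`
relating two extending datums `Ω`, `Ω'`. -/
def ECond (s p : D → D → D) (Ω Ω' : ExtendingDatum D V) (g : V → D) (h : V → V) : Prop :=
  -- (E1)
  (∀ a x, h (Ω.tr1 a x) = Ω'.tr1 a (h x)) ∧
  (∀ a x, h (Ω.tr2 a x) = Ω'.tr2 a (h x)) ∧
  (∀ a x, h (Ω.sl1 x a) = Ω'.sl1 (h x) a) ∧
  (∀ a x, h (Ω.sl2 x a) = Ω'.sl2 (h x) a) ∧
  -- (E2)
  (∀ a x, Ω.hr1 x a + g (Ω.sl1 x a) = s (g x) a + Ω'.hr1 (h x) a) ∧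
  (∀ a x, Ω.hr2 x a + g (Ω.sl2 x a) = p (g x) a + Ω'.hr2 (h x) a) ∧
  -- (E3)
  (∀ a x, Ω.hl1 a x + g (Ω.tr1 a x) = s a (g x) + Ω'.hl1 a (h x)) ∧
  (∀ a x, Ω.hl2 a x + g (Ω.tr2 a x) = p a (g x) + Ω'.hl2 a (h x)) ∧
  -- (E4)
  (∀ x y, Ω.cf1 x y + g (Ω.sv x y) =
      s (g x) (g y) + Ω'.hl1 (g x) (h y) + Ω'.hr1 (h x) (g y) + Ω'.cf1 (h x) (h y)) ∧
  (∀ x y, Ω.cf2 x y + g (Ω.pv x y) =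
      p (g x) (g y) + Ω'.hl2 (g x) (h y) + Ω'.hr2 (h x) (g y) + Ω'.cf2 (h x) (h y)) ∧
  -- (E5)
  (∀ x y, h (Ω.sv x y) = Ω'.tr1 (g x) (h y) + Ω'.sl1 (h x) (g y) + Ω'.sv (h x) (h y)) ∧
  (∀ x y, h (Ω.pv x y) = Ω'.tr2 (g x) (h y) + Ω'.sl2 (h x) (g y) + Ω'.pv (h x) (h y))

/-- A deformation map of an extending structure `Ω(D,V)`. -/
def IsDeformationMap (s p : D → D → D) (Ω : ExtendingDatum D V) (d : V → D) : Prop :=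
  IsLinearMap ℂ d ∧
  (∀ x y, s (d x) (d y) - d (Ω.sv x y) =
      d (Ω.tr1 (d x) y + Ω.sl1 x (d y)) - Ω.hl1 (d x) y - Ω.hr1 x (d y) - Ω.cf1 x y) ∧
  (∀ x y, p (d x) (d y) - d (Ω.pv x y) =
      d (Ω.tr2 (d x) y + Ω.sl2 x (d y)) - Ω.hl2 (d x) y - Ω.hr2 x (d y) - Ω.cf2 x y)

/-- The operation `≻_d` of the deformation `V_d` of `V`. -/
def defSucc (Ω : ExtendingDatum D V) (d : V → D) : V → V → V :=
  fun x y => Ω.sv x y + Ω.tr1 (d x) y + Ω.sl1 x (d y)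

/-- The operation `≺_d` of the deformation `V_d` of `V`. -/
def defPrec (Ω : ExtendingDatum D V) (d : V → D) : V → V → V :=
  fun x y => Ω.pv x y + Ω.tr2 (d x) y + Ω.sl2 x (d y)

end Datum

section Canonical

variable {E : Type*} [AddCommGroup E] [Module ℂ E]

theorem sub_mem_ker (D : Submodule ℂ E) (ρ : E →ₗ[ℂ] E)
    (hρD : ∀ u, ρ u ∈ D) (hfix : ∀ a ∈ D, ρ a = a) (u : E) :
    u - ρ u ∈ LinearMap.ker ρ := by
  have h := hfix (ρ u) (hρD u)
  simp [LinearMap.mem_ker, map_sub, h]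

/-- The canonical extending datum of `D` through `V = ker ρ` associated to a
dendriform algebra structure `(sE, pE)` on `E` and a linear retraction
`ρ : E → D`. -/
def canonicalDatum (sE pE : E → E → E) (D : Submodule ℂ E) (ρ : E →ₗ[ℂ] E)
    (hρD : ∀ u, ρ u ∈ D) (hfix : ∀ a ∈ D, ρ a = a) :
    ExtendingDatum ↥D ↥(LinearMap.ker ρ) where
  tr1 := fun a x => ⟨sE a.1 x.1 - ρ (sE a.1 x.1), sub_mem_ker D ρ hρD hfix _⟩
  tr2 := fun a x => ⟨pE a.1 x.1 - ρ (pE a.1 x.1), sub_mem_ker D ρ hρD hfix _⟩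
  sl1 := fun x a => ⟨sE x.1 a.1 - ρ (sE x.1 a.1), sub_mem_ker D ρ hρD hfix _⟩
  sl2 := fun x a => ⟨pE x.1 a.1 - ρ (pE x.1 a.1), sub_mem_ker D ρ hρD hfix _⟩
  hr1 := fun x a => ⟨ρ (sE x.1 a.1), hρD _⟩
  hr2 := fun x a => ⟨ρ (pE x.1 a.1), hρD _⟩
  hl1 := fun a x => ⟨ρ (sE a.1 x.1), hρD _⟩
  hl2 := fun a x => ⟨ρ (pE a.1 x.1), hρD _⟩
  cf1 := fun x y => ⟨ρ (sE x.1 y.1), hρD _⟩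
  cf2 := fun x y => ⟨ρ (pE x.1 y.1), hρD _⟩
  sv := fun x y => ⟨sE x.1 y.1 - ρ (sE x.1 y.1), sub_mem_ker D ρ hρD hfix _⟩
  pv := fun x y => ⟨pE x.1 y.1 - ρ (pE x.1 y.1), sub_mem_ker D ρ hρD hfix _⟩

/-- The pair of operations on `E` associated to an extending datum of `D`
through `V = ker ρ` (the map `Υ₂`). -/
def datumToOps (D : Submodule ℂ E) (ρ : E →ₗ[ℂ] E)
    (hρD : ∀ u, ρ u ∈ D) (hfix : ∀ a ∈ D, ρ a = a) (sD pD : ↥D → ↥D → ↥D)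
    (Ω : ExtendingDatum ↥D ↥(LinearMap.ker ρ)) : (E → E → E) × (E → E → E) :=
  let dp : E → ↥D := fun u => ⟨ρ u, hρD u⟩
  let vp : E → ↥(LinearMap.ker ρ) := fun u => ⟨u - ρ u, sub_mem_ker D ρ hρD hfix u⟩
  (fun u v =>
     (sD (dp u) (dp v) : E) + (Ω.hl1 (dp u) (vp v) : E) + (Ω.hr1 (vp u) (dp v) : E)
       + (Ω.cf1 (vp u) (vp v) : E) + (Ω.tr1 (dp u) (vp v) : E) + (Ω.sl1 (vp u) (dp v) : E)
       + (Ω.sv (vp u) (vp v) : E),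
   fun u v =>
     (pD (dp u) (dp v) : E) + (Ω.hl2 (dp u) (vp v) : E) + (Ω.hr2 (vp u) (dp v) : E)
       + (Ω.cf2 (vp u) (vp v) : E) + (Ω.tr2 (dp u) (vp v) : E) + (Ω.sl2 (vp u) (dp v) : E)
       + (Ω.pv (vp u) (vp v) : E))

end Canonical

end DendriformES

namespace DendriformES

section Auxiliary

variable {D V : Type*} [AddCommGroup D] [Module ℂ D] [AddCommGroup V] [Module ℂ V]

theorem IsBilinear.zero_left {M N P : Type*} [AddCommGroup M] [Module ℂ M] [AddCommGroup N]
    [Module ℂ N] [AddCommGroup P] [Module ℂ P] {f : M → N → P} (hf : IsBilinear f) (y : N) :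
    f 0 y = 0 := by
  simpa using hf.2.1 0 0 y

theorem IsBilinear.zero_right {M N P : Type*} [AddCommGroup M] [Module ℂ M] [AddCommGroup N]
    [Module ℂ N] [AddCommGroup P] [Module ℂ P] {f : M → N → P} (hf : IsBilinear f) (x : M) :
    f x 0 = 0 := by
  simpa using hf.2.2.2 0 x 0

/-- The extending datum with the maps for `≻` and those for `≺` exchanged. Definitionally,
`uSucc p Ω.swap = uPrec p Ω`. -/
def ExtendingDatum.swap (Ω : ExtendingDatum D V) : ExtendingDatum D V where
  tr1 := Ω.tr2
  tr2 := Ω.tr1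
  sl1 := Ω.sl2
  sl2 := Ω.sl1
  hr1 := Ω.hr2
  hr2 := Ω.hr1
  hl1 := Ω.hl2
  hl2 := Ω.hl1
  cf1 := Ω.cf2
  cf2 := Ω.cf1
  sv := Ω.pv
  pv := Ω.sv

theorem ExtendingDatum.Bilinear.swap {Ω : ExtendingDatum D V} (hΩ : Ω.Bilinear) :
    Ω.swap.Bilinear := by
  obtain ⟨h1, h2, h3, h4, h5, h6, h7, h8, h9, h10, h11, h12⟩ := hΩ
  exact ⟨h2, h1, h4, h3, h6, h5, h8, h7, h10, h9, h12, h11⟩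

/-- The half of (E1)–(E5) concerning `≻` says exactly that `φ(a, x) = (a + g x, h x)`
preserves `⪰`: the conditions are the values on pairs of generators `(a, 0)`, `(0, x)`. -/
theorem preserves_uSucc_iff {s : D → D → D} (hs : IsBilinear s) {Ω Ω' : ExtendingDatum D V}
    (hΩ : Ω.Bilinear) (hΩ' : Ω'.Bilinear) {g : V → D} {h : V → V}
    (hg : IsLinearMap ℂ g) (hh : IsLinearMap ℂ h) :
    (∀ u v : D × V, ((uSucc s Ω u v).1 + g (uSucc s Ω u v).2, h (uSucc s Ω u v).2) =
        uSucc s Ω' (u.1 + g u.2, h u.2) (v.1 + g v.2, h v.2)) ↔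
      (∀ a x, h (Ω.tr1 a x) = Ω'.tr1 a (h x)) ∧
      (∀ a x, h (Ω.sl1 x a) = Ω'.sl1 (h x) a) ∧
      (∀ a x, Ω.hr1 x a + g (Ω.sl1 x a) = s (g x) a + Ω'.hr1 (h x) a) ∧
      (∀ a x, Ω.hl1 a x + g (Ω.tr1 a x) = s a (g x) + Ω'.hl1 a (h x)) ∧
      (∀ x y, Ω.cf1 x y + g (Ω.sv x y) =
        s (g x) (g y) + Ω'.hl1 (g x) (h y) + Ω'.hr1 (h x) (g y) + Ω'.cf1 (h x) (h y)) ∧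
      (∀ x y, h (Ω.sv x y) =
        Ω'.tr1 (g x) (h y) + Ω'.sl1 (h x) (g y) + Ω'.sv (h x) (h y)) := by
  obtain ⟨tr, -, sl, -, hr, -, hl, -, cf, -, sv, -⟩ := hΩ
  obtain ⟨tr', -, sl', -, hr', -, hl', -, cf', -, sv', -⟩ := hΩ'
  constructor
  · intro H
    have hDV := fun a x => H (a, 0) (0, x)
    have hVD := fun a x => H (0, x) (a, 0)
    have hVV := fun x y => H (0, x) (0, y)
    simp only [uSucc, Prod.mk.injEq, hg.map_zero, hh.map_zero, IsBilinear.zero_left,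
      IsBilinear.zero_right, hs, tr, sl, hr, hl, cf, sv, tr', sl', hr', hl', cf', sv',
      add_zero, zero_add] at hDV hVD hVV
    exact ⟨fun a x => (hDV a x).2, fun a x => (hVD a x).2, fun a x => (hVD a x).1,
      fun a x => (hDV a x).1, fun x y => (hVV x y).1, fun x y => (hVV x y).2⟩
  · rintro ⟨e1, e1', e2, e3, e4, e5⟩ ⟨a, x⟩ ⟨b, y⟩
    simp only [uSucc, Prod.mk.injEq, hg.map_add, hh.map_add]
    constructor
    · rw [hs.1, hs.2.2.1, hs.2.2.1, hl'.1, hr'.2.2.1]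
      linear_combination (norm := module) e2 b x + e3 a y + e4 x y
    · rw [tr'.1, sl'.2.2.1, e1, e1', e5]
      abel

end Auxiliary

/-- for linear maps `g : V → D`, `h : V → V`, the map
`φ(a,x) = (a + g(x), h(x))` is a morphism of dendriform algebras
`D ♮ V → D ♮′ V` stabilizing `D` if and only if `(g,h)` satisfies (E1)–(E5);
moreover every such morphism arises from a unique pair `(g,h)`. -/
theorem morphism_iff_ECond {D V : Type*}
    [AddCommGroup D] [Module ℂ D] [AddCommGroup V] [Module ℂ V]
    (s p : D → D → D) (hD : IsDendriform s p)
    (Ω Ω' : ExtendingDatum D V)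
    (hΩ : IsExtendingStructure s p Ω) (hΩ' : IsExtendingStructure s p Ω')
    (g : V → D) (h : V → V) (hg : IsLinearMap ℂ g) (hh : IsLinearMap ℂ h) :
    (let φ : D × V → D × V := fun u => (u.1 + g u.2, h u.2)
     (IsLinearMap ℂ φ ∧
      (∀ u v, φ (uSucc s Ω u v) = uSucc s Ω' (φ u) (φ v)) ∧
      (∀ u v, φ (uPrec p Ω u v) = uPrec p Ω' (φ u) (φ v)) ∧
      (∀ a : D, φ (a, 0) = (a, 0))) ↔ ECond s p Ω Ω' g h) ∧
    (∀ ψ : D × V → D × V, IsLinearMap ℂ ψ →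
      (∀ u v, ψ (uSucc s Ω u v) = uSucc s Ω' (ψ u) (ψ v)) →
      (∀ u v, ψ (uPrec p Ω u v) = uPrec p Ω' (ψ u) (ψ v)) →
      (∀ a : D, ψ (a, 0) = (a, 0)) →
      ∃! gh : (V → D) × (V → V),
        IsLinearMap ℂ gh.1 ∧ IsLinearMap ℂ gh.2 ∧ ECond s p Ω Ω' gh.1 gh.2 ∧
        ψ = fun u => (u.1 + gh.1 u.2, gh.2 u.2)) := by
  have key : ∀ (g : V → D) (h : V → V), IsLinearMap ℂ g → IsLinearMap ℂ h →
      (((∀ u v : D × V, ((uSucc s Ω u v).1 + g (uSucc s Ω u v).2, h (uSucc s Ω u v).2) =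
          uSucc s Ω' (u.1 + g u.2, h u.2) (v.1 + g v.2, h v.2)) ∧
        (∀ u v : D × V, ((uPrec p Ω u v).1 + g (uPrec p Ω u v).2, h (uPrec p Ω u v).2) =
          uPrec p Ω' (u.1 + g u.2, h u.2) (v.1 + g v.2, h v.2))) ↔ ECond s p Ω Ω' g h) := by
    intro g h hg hh
    have e1 := preserves_uSucc_iff hD.1 hΩ.1 hΩ'.1 hg hh
    have e2 := preserves_uSucc_iff hD.2.1 hΩ.1.swap hΩ'.1.swap hg hh
    refine (and_congr e1 e2).trans ?_
    simp only [ExtendingDatum.swap, ECond]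
    tauto
  refine ⟨⟨fun H => (key g h hg hh).1 ⟨H.2.1, H.2.2.1⟩, fun H => ?_⟩, ?_⟩
  · obtain ⟨H1, H2⟩ := (key g h hg hh).2 H
    refine ⟨⟨fun u v => ?_, fun c u => ?_⟩, H1, H2, fun a => ?_⟩
    · ext
      · simp only [Prod.fst_add, Prod.snd_add, hg.map_add]
        abel
      · simp [hh.map_add]
    · simp [hg.map_smul, hh.map_smul]
    · simp [hg.map_zero, hh.map_zero]
  · intro ψ hψ hS hP hfix
    have hform : ψ = fun u => (u.1 + (ψ (0, u.2)).1, (ψ (0, u.2)).2) := by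
      funext ⟨a, x⟩
      have hsplit : ψ (a, x) = ψ (a, 0) + ψ (0, x) := by simp [← hψ.map_add]
      rw [hsplit, hfix]
      ext <;> simp
    have hadd : ∀ x y : V, ψ (0, x + y) = ψ (0, x) + ψ (0, y) := fun x y => by
      simp [← hψ.map_add]
    have hsmul : ∀ (c : ℂ) (x : V), ψ (0, c • x) = c • ψ (0, x) := fun c x => by
      simp [← hψ.map_smul]
    have hg' : IsLinearMap ℂ fun x => (ψ (0, x)).1 :=
      ⟨fun x y => by simp [hadd], fun c x => by simp [hsmul]⟩
    have hh' : IsLinearMap ℂ fun x => (ψ (0, x)).2 :=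
      ⟨fun x y => by simp [hadd], fun c x => by simp [hsmul]⟩
    refine ⟨(fun x => (ψ (0, x)).1, fun x => (ψ (0, x)).2),
      ⟨hg', hh', (key _ _ hg' hh').1 ⟨fun u v => ?_, fun u v => ?_⟩, hform⟩, ?_⟩
    · have := hS u v
      rwa [congrFun hform (uSucc s Ω u v), congrFun hform u, congrFun hform v] at this
    · have := hP u v
      rwa [congrFun hform (uPrec p Ω u v), congrFun hform u, congrFun hform v] at this
    · rintro ⟨g', h'⟩ ⟨-, -, -, rfl⟩
      simp

end DendriformES
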